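/- For general points, if 4d ≥ 18n + 3 and n ≥ 1, then ℓ(L(d, d−3, 6^n)) ≥ 4d − 18n − 3, with equality whenever n is odd or 2d ≠ 9n + 2. Since v(L(d, d−3, 6^n)) = 4d − 21n − 3, this system is special. -/

import Mathlib

open MvPolynomial

/-- The iterated partial derivative corresponding to the multi-index `ν`. -/
noncomputable def mderiv (ν : Fin 3 → ℕ) :
    MvPolynomial (Fin 3) ℂ →ₗ[ℂ] MvPolynomial (Fin 3) ℂ :=
  ((pderiv (R := ℂ) (0 : Fin 3)).toLinearMap ^ ν 0) ∘ₗ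
  ((pderiv (R := ℂ) (1 : Fin 3)).toLinearMap ^ ν 1) ∘ₗ
  ((pderiv (R := ℂ) (2 : Fin 3)).toLinearMap ^ ν 2)

/-- The linear system `L(d; m)` of homogeneous forms of degree `d` in three variables
all of whose partial derivatives of order `< m i` vanish at the point `p i`,
i.e. plane curves of degree `d` with multiplicity at least `m i` at `p i`. -/
noncomputable def linSys {k : ℕ} (p : Fin k → Fin 3 → ℂ) (d : ℕ) (m : Fin k → ℕ) :
    Submodule ℂ (MvPolynomial (Fin 3) ℂ) :=
  (homogeneousSubmodule (Fin 3) ℂ d) ⊓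
    ⨅ (i : Fin k), ⨅ (ν : Fin 3 → ℕ), ⨅ (_ : ν 0 + ν 1 + ν 2 < m i),
      LinearMap.ker ((aeval (p i)).toLinearMap ∘ₗ mderiv ν)

/-- The projective dimension `ℓ` of the linear system (`-1` means empty). -/
noncomputable def projDim {k : ℕ} (p : Fin k → Fin 3 → ℂ) (d : ℕ) (m : Fin k → ℕ) : ℤ :=
  (Module.finrank ℂ (linSys p d m) : ℤ) - 1

/-- The virtual dimension `v = d(d+3)/2 - ∑ mᵢ(mᵢ+1)/2`. -/
def virtDim {k : ℕ} (d : ℕ) (m : Fin k → ℕ) : ℤ :=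
  ((d : ℤ) * (d + 3)) / 2 - ∑ i : Fin k, ((m i : ℤ) * (m i + 1)) / 2

/-- The quasi-homogeneous multiplicity vector `(m₀, 6, …, 6)` on `n + 1` points. -/
def qh (n m0 : ℕ) : Fin (n + 1) → ℕ := fun i => if i = 0 then m0 else 6

/-- A property `Q` of configurations of `k` points of `ℙ²` (given by nonzero homogeneous
coordinate vectors) holds for points in general position: there is a nonzero polynomial
in the coordinates such that `Q` holds whenever it does not vanish. -/
def Generically (k : ℕ) (Q : (Fin k → Fin 3 → ℂ) → Prop) : Prop :=
  ∃ P : MvPolynomial (Fin k × Fin 3) ℂ, P ≠ 0 ∧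
    ∀ p : Fin k → Fin 3 → ℂ, (∀ i, p i ≠ 0) →
      eval (fun x => p x.1 x.2) P ≠ 0 → Q p

/-- `F` and its iterated partial derivatives of order `< m` all vanish at `p`. -/
def VanishesToOrder (p : Fin 3 → ℂ) : ℕ → MvPolynomial (Fin 3) ℂ → Prop
  | 0, _ => True
  | m + 1, F => eval p F = 0 ∧ ∀ i, VanishesToOrder p m (pderiv i F)

theorem pderiv_pderiv_comm {σ : Type*} (i j : σ) (F : MvPolynomial σ ℂ) :
    pderiv i (pderiv j F) = pderiv j (pderiv i F) := by
  classical
  have h : ⁅(pderiv i : Derivation ℂ (MvPolynomial σ ℂ) (MvPolynomial σ ℂ)),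
      pderiv (R := ℂ) j⁆ = 0 := by
    apply MvPolynomial.derivation_ext
    intro k
    simp only [Derivation.commutator_apply, pderiv_X, Derivation.zero_apply]
    rw [Pi.single_apply, Pi.single_apply]
    split_ifs <;> simp
  have h' := congrArg (fun D => D F) h
  simpa [Derivation.commutator_apply, sub_eq_zero] using h'

theorem mderiv_zero (F : MvPolynomial (Fin 3) ℂ) : mderiv 0 F = F := by
  simp [mderiv]

theorem commute_pderiv (i j : Fin 3) :
    Commute ((pderiv (R := ℂ) i).toLinearMap : Module.End ℂ (MvPolynomial (Fin 3) ℂ))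
      (pderiv (R := ℂ) j).toLinearMap :=
  LinearMap.ext fun F => pderiv_pderiv_comm i j F

theorem mderiv_pderiv (ν : Fin 3 → ℕ) (i : Fin 3) (F : MvPolynomial (Fin 3) ℂ) :
    mderiv ν (pderiv i F) = mderiv (ν + Pi.single i 1) F := by
  let D : Fin 3 → Module.End ℂ (MvPolynomial (Fin 3) ℂ) :=
    fun j => (pderiv (R := ℂ) j).toLinearMap
  have hc : ∀ i j a, D j ^ a * D i = D i * D j ^ a :=
    fun i j a => ((commute_pderiv i j).pow_right a).eq.symm
  have h : (D 0 ^ ν 0 * (D 1 ^ ν 1 * D 2 ^ ν 2)) * D i =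
      D 0 ^ (ν + Pi.single i 1 : Fin 3 → ℕ) 0 * (D 1 ^ (ν + Pi.single i 1 : Fin 3 → ℕ) 1 *
        D 2 ^ (ν + Pi.single i 1 : Fin 3 → ℕ) 2) := by
    fin_cases i
    · simp only [Fin.zero_eta, Pi.add_apply, Pi.single_apply, Fin.reduceEq, if_true, if_false,
        add_zero, pow_succ, mul_assoc, hc 0 2]
      rw [← mul_assoc (D 1 ^ ν 1), hc 0 1, mul_assoc]
    · simp only [Fin.mk_one, Pi.add_apply, Pi.single_apply, Fin.reduceEq, if_true, if_false,
        add_zero, pow_succ, mul_assoc, hc 1 2]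
    · simp [pow_succ, mul_assoc]
  exact congrArg (fun T : Module.End ℂ (MvPolynomial (Fin 3) ℂ) => T F) h

theorem sum_add_single (ν : Fin 3 → ℕ) (i : Fin 3) :
    (ν + Pi.single i 1 : Fin 3 → ℕ) 0 + (ν + Pi.single i 1 : Fin 3 → ℕ) 1 +
        (ν + Pi.single i 1 : Fin 3 → ℕ) 2 =
      ν 0 + ν 1 + ν 2 + 1 := by
  fin_cases i <;> simp <;> omega

theorem exists_eq_add_single {ν : Fin 3 → ℕ} (h : ν ≠ 0) :
    ∃ (ν' : Fin 3 → ℕ) (i : Fin 3), ν = ν' + Pi.single i 1 := by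
  obtain ⟨i, hi⟩ := Function.ne_iff.1 h
  refine ⟨ν - Pi.single i 1, i, ?_⟩
  rw [tsub_add_cancel_of_le]
  intro j
  by_cases hj : j = i
  · subst hj
    simpa using Nat.one_le_iff_ne_zero.2 hi
  · simp [hj]

theorem vanishesToOrder_iff (p : Fin 3 → ℂ) (m : ℕ) (F : MvPolynomial (Fin 3) ℂ) :
    VanishesToOrder p m F ↔
      ∀ ν : Fin 3 → ℕ, ν 0 + ν 1 + ν 2 < m → eval p (mderiv ν F) = 0 := by
  induction m generalizing F with
  | zero => simp [VanishesToOrder]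
  | succ m ih =>
    simp only [VanishesToOrder, ih, mderiv_pderiv]
    constructor
    · rintro ⟨h0, h⟩ ν hν
      by_cases hz : ν = 0
      · rw [hz, mderiv_zero, h0]
      · obtain ⟨ν', i, rfl⟩ := exists_eq_add_single hz
        rw [sum_add_single] at hν
        exact h i ν' (by omega)
    · intro h
      refine ⟨by simpa [mderiv_zero] using h 0 (by simp), fun i ν hν => h _ ?_⟩
      rw [sum_add_single]
      omega

theorem mem_linSys {k : ℕ} {p : Fin k → Fin 3 → ℂ} {d : ℕ} {m : Fin k → ℕ}
    {F : MvPolynomial (Fin 3) ℂ} :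
    F ∈ linSys p d m ↔ F.IsHomogeneous d ∧ ∀ i, VanishesToOrder (p i) (m i) F := by
  simp [linSys, vanishesToOrder_iff, Submodule.mem_iInf, MvPolynomial.aeval_eq_eval]

namespace VanishesToOrder

variable {p : Fin 3 → ℂ} {m : ℕ} {F G : MvPolynomial (Fin 3) ℂ}

theorem add (hF : VanishesToOrder p m F) (hG : VanishesToOrder p m G) :
    VanishesToOrder p m (F + G) := by
  induction m generalizing F G with
  | zero => trivial
  | succ m ih =>
    refine ⟨by rw [map_add, hF.1, hG.1, add_zero], fun i => ?_⟩
    rw [map_add]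
    exact ih (hF.2 i) (hG.2 i)

theorem of_succ (hF : VanishesToOrder p (m + 1) F) : VanishesToOrder p m F := by
  rw [vanishesToOrder_iff] at hF ⊢
  exact fun ν hν => hF ν (by omega)

theorem mul_left (A : MvPolynomial (Fin 3) ℂ) (hF : VanishesToOrder p m F) :
    VanishesToOrder p m (A * F) := by
  induction m generalizing A F with
  | zero => trivial
  | succ m ih =>
    refine ⟨by rw [map_mul, hF.1, mul_zero], fun i => ?_⟩
    rw [pderiv_mul]
    exact (ih _ hF.of_succ).add (ih _ (hF.2 i))

theorem mul_left_succ {A : MvPolynomial (Fin 3) ℂ} (hA : eval p A = 0)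
    (hF : VanishesToOrder p m F) : VanishesToOrder p (m + 1) (A * F) := by
  induction m generalizing F with
  | zero =>
    exact ⟨by rw [map_mul, hA, zero_mul], fun i => trivial⟩
  | succ m ih =>
    refine ⟨by rw [map_mul, hA, zero_mul], fun i => ?_⟩
    rw [pderiv_mul]
    exact (hF.mul_left _).add (ih (hF.2 i))

theorem pow_mul {A : MvPolynomial (Fin 3) ℂ} (hA : eval p A = 0)
    (hF : VanishesToOrder p m F) (k : ℕ) : VanishesToOrder p (m + k) (A ^ k * F) := by
  induction k with
  | zero => simpa using hF
  | succ k ih =>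
    rw [pow_succ', mul_assoc]
    exact ih.mul_left_succ hA

theorem prod_pow_mul {ι : Type*} (s : Finset ι) {A : ι → MvPolynomial (Fin 3) ℂ}
    (hA : ∀ i ∈ s, eval p (A i) = 0) (hF : VanishesToOrder p m F) (k : ℕ) :
    VanishesToOrder p (m + k * s.card) ((∏ i ∈ s, A i ^ k) * F) := by
  classical
  induction s using Finset.induction_on with
  | empty => simpa using hF
  | insert a s ha ih =>
    rw [Finset.prod_insert ha, mul_assoc, Finset.card_insert_of_notMem ha, mul_add, ← add_assoc,
      mul_one]
    exact (ih fun i hi => hA i (Finset.mem_insert_of_mem hi)).pow_mul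
      (hA a (Finset.mem_insert_self a s)) k

/-- For a form it suffices to test the partial derivatives of order exactly `m - 1`. -/
theorem of_isHomogeneous {e : ℕ} (hF : F.IsHomogeneous e) (hm : m ≤ e + 1)
    (h : ∀ ν : Fin 3 → ℕ, ν 0 + ν 1 + ν 2 + 1 = m → eval p (mderiv ν F) = 0) :
    VanishesToOrder p m F := by
  induction m generalizing F e with
  | zero => trivial
  | succ m ih =>
    have key : ∀ i, VanishesToOrder p m (pderiv i F) := by
      intro i
      by_cases hm0 : m = 0
      · subst hm0
        trivial
      · refine ih (e := e - 1) hF.pderiv (by omega) fun ν hν => ?_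
        rw [mderiv_pderiv]
        exact h _ (by rw [sum_add_single]; omega)
    refine ⟨?_, key⟩
    cases m with
    | zero => simpa [mderiv_zero] using h 0 (by simp)
    | succ m =>
      have hE := congrArg (eval p) hF.sum_X_mul_pderiv
      simp only [map_sum, map_mul, (key _).1, mul_zero, Finset.sum_const_zero, nsmul_eq_mul,
        map_natCast] at hE
      have he : (e : ℂ) ≠ 0 := by
        exact_mod_cast (by omega : e ≠ 0)
      simpa [he] using hE.symm

end VanishesToOrder

theorem aeval_mul_left_of_isHomogeneous {R : Type*} [CommRing R] [Algebra ℂ R] {d : ℕ}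
    {F : MvPolynomial (Fin 3) ℂ} (hF : F.IsHomogeneous d) (c : R) (g : Fin 3 → R) :
    aeval (fun i => c * g i) F = c ^ d * aeval g F := by
  simp only [aeval_def, eval₂_eq, Finset.mul_sum]
  refine Finset.sum_congr rfl fun s hs => ?_
  have hd : ∑ i ∈ s.support, s i = d := (hF.degree_eq_sum_deg_support hs).symm
  simp only [mul_pow, Finset.prod_mul_distrib, Finset.prod_pow_eq_pow_sum, hd]
  ring

theorem derivative_aeval {R : Type*} [CommRing R] [Algebra ℂ R] (g : Fin 3 → Polynomial R)
    (F : MvPolynomial (Fin 3) ℂ) :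
    Polynomial.derivative (aeval g F) =
      ∑ i, Polynomial.derivative (g i) * aeval g (pderiv i F) := by
  induction F using MvPolynomial.induction_on with
  | C c => simp [IsScalarTower.algebraMap_apply ℂ R (Polynomial R)]
  | add F G hF hG => simp only [map_add, hF, hG, mul_add, Finset.sum_add_distrib]
  | mul_X F j hF =>
    have h : ∀ i, Polynomial.derivative (g i) * aeval g (pderiv i (F * X j)) =
        Polynomial.derivative (g i) * aeval g (pderiv i F) * g j +
          if i = j then aeval g F * Polynomial.derivative (g j) else 0 := by
      intro i
      rw [pderiv_mul, pderiv_X, map_add, map_mul, map_mul, aeval_X]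
      split_ifs with hij
      · subst hij
        simp only [Pi.single_eq_same, map_one]
        ring
      · rw [Pi.single_eq_of_ne' hij, map_zero]
        ring
    rw [map_mul, aeval_X, Polynomial.derivative_mul, hF]
    simp only [h, Finset.sum_add_distrib, Finset.sum_ite_eq', Finset.mem_univ, if_true,
      Finset.sum_mul]

theorem VanishesToOrder.coeff_aeval_line {R : Type*} [CommRing R] [Algebra ℂ R] [IsDomain R]
    {p : Fin 3 → ℂ} {m d : ℕ} {F : MvPolynomial (Fin 3) ℂ} (hF : VanishesToOrder p m F)
    (hd : F.IsHomogeneous d) (c : R) (q : Fin 3 → R) (k : ℕ) (hk : k < m) :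
    (aeval (fun i => Polynomial.C (c * algebraMap ℂ R (p i)) +
      Polynomial.X * Polynomial.C (q i)) F : Polynomial R).coeff k = 0 := by
  have : CharZero R := charZero_of_injective_algebraMap (algebraMap ℂ R).injective
  induction k generalizing F m d with
  | zero =>
    obtain ⟨m, rfl⟩ : ∃ m', m = m' + 1 := ⟨m - 1, by omega⟩
    rw [Polynomial.coeff_zero_eq_aeval_zero, ← AlgHom.coe_restrictScalars' ℂ,
      ← AlgHom.comp_apply, MvPolynomial.comp_aeval]
    have h : aeval (fun i => c * algebraMap ℂ R (p i)) F = 0 := by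
      have h' := MvPolynomial.aeval_algebraMap_apply R p F
      rw [Function.comp_def] at h'
      rw [aeval_mul_left_of_isHomogeneous hd, h', MvPolynomial.aeval_eq_eval]
      simp [hF.1]
    refine Eq.trans ?_ h
    congr 2
    ext i
    simp only [AlgHom.coe_restrictScalars', map_add, map_mul, Polynomial.aeval_C,
      Polynomial.aeval_X, zero_mul, add_zero, Algebra.algebraMap_self, RingHom.id_apply]
  | succ k ih =>
    obtain ⟨m, rfl⟩ : ∃ m', m = m' + 1 := ⟨m - 1, by omega⟩
    have h := congrArg (fun P => P.coeff k)
      (derivative_aeval (fun i => Polynomial.C (c * algebraMap ℂ R (p i)) +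
        Polynomial.X * Polynomial.C (q i)) F)
    simp only [Polynomial.derivative_add, Polynomial.derivative_C, Polynomial.derivative_mul,
      Polynomial.derivative_X, one_mul, mul_zero, add_zero, zero_add,
      Polynomial.coeff_derivative, Polynomial.finsetSum_coeff,
      Polynomial.coeff_C_mul] at h
    rw [Finset.sum_eq_zero fun i _ => by rw [ih (hF.2 i) hd.pderiv (by omega), mul_zero]] at h
    refine (mul_eq_zero.1 h).resolve_right ?_
    exact_mod_cast Nat.succ_ne_zero k

/-- If a form vanishes to order `m` at `p`, then its value at a point congruent modulo `T` to a
multiple of `p` is divisible by `T ^ m`. -/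
theorem VanishesToOrder.pow_dvd_aeval {R : Type*} [CommRing R] [Algebra ℂ R] [IsDomain R]
    {p : Fin 3 → ℂ} {m d : ℕ} {F : MvPolynomial (Fin 3) ℂ} (hF : VanishesToOrder p m F)
    (hd : F.IsHomogeneous d) (c T : R) (g : Fin 3 → R)
    (hg : ∀ i, T ∣ g i - c * algebraMap ℂ R (p i)) : T ^ m ∣ aeval g F := by
  choose q hq using hg
  have h := Polynomial.X_pow_dvd_iff.2 (hF.coeff_aeval_line hd c q)
  have h' := map_dvd (Polynomial.aeval (R := R) T) h
  rw [map_pow, Polynomial.aeval_X, ← AlgHom.coe_restrictScalars' ℂ,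
      ← AlgHom.comp_apply, MvPolynomial.comp_aeval] at h'
  convert h' using 3
  simp only [AlgHom.coe_restrictScalars', map_add, map_mul, Polynomial.aeval_C,
    Polynomial.aeval_X, Algebra.algebraMap_self, RingHom.id_apply, ← hq, add_sub_cancel]

theorem finrank_homogeneousSubmodule_three (d : ℕ) :
    Module.finrank ℂ (homogeneousSubmodule (Fin 3) ℂ d) = (d + 2).choose 2 := by
  have e : {s : Fin 3 →₀ ℕ | s.degree = d} ≃
      (Finset.univ : Finset (Fin 3)).finsuppAntidiag d :=
    Equiv.subtypeEquivRight fun s => by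
      simp [Finset.mem_finsuppAntidiag, Finsupp.degree_eq_sum]
  have : Fintype {s : Fin 3 →₀ ℕ | s.degree = d} := Fintype.ofEquiv _ e.symm
  rw [homogeneousSubmodule_eq_finsupp_supported,
    (AddMonoidAlgebra.supportedEquivFinsupp (R := ℂ) (S := ℂ)
      {s : Fin 3 →₀ ℕ | s.degree = d}).finrank_eq,
    Module.finrank_finsupp_self, Fintype.card_congr e, Fintype.card_coe,
    Finset.card_finsuppAntidiag_nat_eq_choose, Finset.card_univ, Fintype.card_fin]
  rw [show 3 + d - 1 = d + 2 by omega, Nat.choose_symm_add]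

instance finiteDimensional_homogeneousSubmodule (d : ℕ) :
    FiniteDimensional ℂ (homogeneousSubmodule (Fin 3) ℂ d) :=
  Module.Finite.iff_fg.2 (homogeneousSubmodule_fg (Fin 3) ℂ d)

theorem linSys_le {k : ℕ} (p : Fin k → Fin 3 → ℂ) (d : ℕ) (m : Fin k → ℕ) :
    linSys p d m ≤ homogeneousSubmodule (Fin 3) ℂ d :=
  inf_le_left

instance finiteDimensional_linSys {k : ℕ} (p : Fin k → Fin 3 → ℂ) (d : ℕ) (m : Fin k → ℕ) :
    FiniteDimensional ℂ (linSys p d m) :=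
  Submodule.finiteDimensional_of_le (linSys_le p d m)

/-- The multi-indices of order `m - 1` (none if `m = 0`). -/
noncomputable def topIndices (m : ℕ) : Finset (Fin 3 →₀ ℕ) :=
  if m = 0 then ∅ else (Finset.univ : Finset (Fin 3)).finsuppAntidiag (m - 1)

theorem mem_topIndices {m : ℕ} {ν : Fin 3 →₀ ℕ} :
    ν ∈ topIndices m ↔ ν 0 + ν 1 + ν 2 + 1 = m := by
  unfold topIndices
  split_ifs with h
  · simp [h]
  · simp only [Finset.mem_finsuppAntidiag, Fin.sum_univ_three, Finset.subset_univ, and_true]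
    omega

theorem card_topIndices (m : ℕ) : (topIndices m).card = (m + 1).choose 2 := by
  unfold topIndices
  split_ifs with h
  · simp [h]
  · obtain ⟨m, rfl⟩ : ∃ m', m = m' + 1 := ⟨m - 1, by omega⟩
    rw [Finset.card_finsuppAntidiag_nat_eq_choose, Finset.card_univ, Fintype.card_fin,
      show 3 + (m + 1 - 1) - 1 = m + 2 by omega, Nat.add_sub_cancel, Nat.choose_symm_add]

/-- The conditions cutting out `linSys p e m` in the space of forms of degree `e`. -/
noncomputable def conditions {k : ℕ} (p : Fin k → Fin 3 → ℂ) (e : ℕ) (m : Fin k → ℕ) :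
    homogeneousSubmodule (Fin 3) ℂ e →ₗ[ℂ] ((Σ i, topIndices (m i)) → ℂ) :=
  LinearMap.pi fun x => (aeval (p x.1)).toLinearMap ∘ₗ mderiv x.2.1 ∘ₗ Submodule.subtype _

theorem conditions_apply {k : ℕ} (p : Fin k → Fin 3 → ℂ) (e : ℕ) (m : Fin k → ℕ)
    (F : homogeneousSubmodule (Fin 3) ℂ e) (x : Σ i, topIndices (m i)) :
    conditions p e m F x = eval (p x.1) (mderiv x.2.1 F.1) := by
  simp [conditions, MvPolynomial.aeval_eq_eval]

theorem map_ker_conditions {k : ℕ} (p : Fin k → Fin 3 → ℂ) {e : ℕ} {m : Fin k → ℕ}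
    (hm : ∀ i, m i ≤ e + 1) :
    (LinearMap.ker (conditions p e m)).map (Submodule.subtype _) = linSys p e m := by
  ext F
  constructor
  · rintro ⟨F, hF, rfl⟩
    refine mem_linSys.2 ⟨F.2, fun i => .of_isHomogeneous F.2 (hm i) fun ν hν => ?_⟩
    have h := congrFun hF ⟨i, Finsupp.equivFunOnFinite.symm ν, mem_topIndices.2 hν⟩
    rw [conditions_apply] at h
    simpa using h
  · intro hF
    rw [mem_linSys] at hF
    refine ⟨⟨F, hF.1⟩, ?_, rfl⟩
    ext x
    rw [conditions_apply]
    refine (vanishesToOrder_iff _ _ _).1 (hF.2 x.1) _ ?_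
    have := mem_topIndices.1 x.2.2
    omega

theorem finrank_ker_conditions {k : ℕ} (p : Fin k → Fin 3 → ℂ) {e : ℕ} {m : Fin k → ℕ}
    (hm : ∀ i, m i ≤ e + 1) :
    Module.finrank ℂ (LinearMap.ker (conditions p e m)) = Module.finrank ℂ (linSys p e m) := by
  rw [← map_ker_conditions p hm, Submodule.finrank_map_subtype_eq]

/-- Vanishing to order `m` at a point imposes at most `m (m + 1) / 2` conditions. -/
theorem choose_two_le_finrank_linSys_add {k : ℕ} (p : Fin k → Fin 3 → ℂ) {e : ℕ} {m : Fin k → ℕ}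
    (hm : ∀ i, m i ≤ e + 1) :
    (e + 2).choose 2 ≤ Module.finrank ℂ (linSys p e m) + ∑ i, (m i + 1).choose 2 := by
  have h1 := LinearMap.finrank_range_add_finrank_ker (conditions p e m)
  have h2 := Submodule.finrank_le (LinearMap.range (conditions p e m))
  rw [finrank_homogeneousSubmodule_three, finrank_ker_conditions p hm] at h1
  rw [Module.finrank_fintype_fun_eq_card, Fintype.card_sigma] at h2
  simp only [Fintype.card_coe, card_topIndices] at h2
  omega

/-- The dimension of the kernel is upper semicontinuous, as witnessed by a minor. -/
theorem exists_det_finrank_ker_le {V J : Type*} [AddCommGroup V] [Module ℂ V]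
    [FiniteDimensional ℂ V] [Fintype J] (T₀ : V →ₗ[ℂ] (J → ℂ)) :
    ∃ (q : ℕ) (w : Fin q → V) (c : Fin q → J → ℂ),
      (Matrix.of fun a b => ∑ j, c a j * T₀ (w b) j).det = 1 ∧
      ∀ T : V →ₗ[ℂ] (J → ℂ), (Matrix.of fun a b => ∑ j, c a j * T (w b) j).det ≠ 0 →
        Module.finrank ℂ (LinearMap.ker T) ≤ Module.finrank ℂ (LinearMap.ker T₀) := by
  classical
  obtain ⟨W, hW⟩ := Submodule.exists_isCompl (LinearMap.ker T₀)
  have hker : LinearMap.ker (T₀ ∘ₗ W.subtype) = ⊥ := by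
    rw [LinearMap.ker_comp, ← Submodule.disjoint_iff_comap_eq_bot]
    exact hW.disjoint.symm
  obtain ⟨L, hL⟩ := LinearMap.exists_leftInverse_of_injective _ hker
  let w := Module.finBasis ℂ W
  have hM : ∀ T : V →ₗ[ℂ] (J → ℂ),
      (Matrix.of fun a b => ∑ j, w.repr (L (Pi.single j 1)) a * T (w b : V) j).det =
        LinearMap.det (L ∘ₗ T ∘ₗ W.subtype) := by
    intro T
    rw [← LinearMap.det_toMatrix w]
    congr 1
    ext a b
    rw [LinearMap.toMatrix_apply, Matrix.of_apply]
    simp only [LinearMap.comp_apply]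
    conv_rhs => rw [← Finset.univ_sum_single (T (W.subtype (w b)))]
    simp only [map_sum, Finsupp.coe_finsetSum, Finset.sum_apply]
    refine Finset.sum_congr rfl fun j _ => ?_
    have hs : (Pi.single j (T (W.subtype (w b)) j) : J → ℂ) =
        T (W.subtype (w b)) j • Pi.single j 1 := by
      rw [← Pi.single_smul, smul_eq_mul, mul_one]
    rw [hs, map_smul, map_smul, Finsupp.smul_apply, smul_eq_mul, mul_comm]
    rfl
  refine ⟨_, fun b => w b, fun a j => w.repr (L (Pi.single j 1)) a, ?_, fun T hT => ?_⟩
  · rw [hM, hL, LinearMap.det_id]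
  · rw [hM] at hT
    have hdisj : Disjoint (LinearMap.ker T) W := by
      rw [disjoint_comm, Submodule.disjoint_iff_comap_eq_bot, ← LinearMap.ker_comp, eq_bot_iff]
      refine (LinearMap.ker_le_ker_comp _ L).trans ?_
      exact (not_not.1 (mt LinearMap.det_eq_zero_iff_ker_ne_bot.2 hT)).le
    have h1 := Submodule.finrank_add_eq_of_isCompl hW
    have h2 := Submodule.finrank_add_finrank_le_of_disjoint hdisj
    omega

/-- The dimension of a linear system is upper semicontinuous in the points. -/
theorem exists_forall_finrank_linSys_le {k : ℕ} (p₀ : Fin k → Fin 3 → ℂ) {e : ℕ} {m : Fin k → ℕ}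
    (hm : ∀ i, m i ≤ e + 1) :
    ∃ P : MvPolynomial (Fin k × Fin 3) ℂ, P ≠ 0 ∧ ∀ p : Fin k → Fin 3 → ℂ,
      eval (fun x => p x.1 x.2) P ≠ 0 →
        Module.finrank ℂ (linSys p e m) ≤ Module.finrank ℂ (linSys p₀ e m) := by
  obtain ⟨q, w, c, h1, h2⟩ := exists_det_finrank_ker_le (conditions p₀ e m)
  let M : Matrix (Fin q) (Fin q) (MvPolynomial (Fin k × Fin 3) ℂ) := Matrix.of fun a b =>
    ∑ x, C (c a x) * rename (fun i => (x.1, i)) (mderiv x.2.1 (w b).1)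
  have hM : ∀ p : Fin k → Fin 3 → ℂ, eval (fun x => p x.1 x.2) M.det =
      (Matrix.of fun a b => ∑ j, c a j * conditions p e m (w b) j).det := by
    intro p
    rw [RingHom.map_det]
    congr 1
    ext a b
    simp only [RingHom.mapMatrix_apply, Matrix.map_apply, M, Matrix.of_apply,
      map_sum, map_mul, eval_C, eval_rename, conditions_apply]
    rfl
  refine ⟨M.det, ?_, fun p hp => ?_⟩
  · intro h
    have h' := hM p₀
    rw [h1, h, map_zero] at h'
    exact zero_ne_one h'
  · rw [← finrank_ker_conditions p hm, ← finrank_ker_conditions p₀ hm]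
    exact h2 _ (by rwa [← hM])

/-- The linear form with coefficient vector `a`. -/
noncomputable def linearForm (a : Fin 3 → ℂ) : MvPolynomial (Fin 3) ℂ := ∑ j, C (a j) * X j

theorem isHomogeneous_linearForm (a : Fin 3 → ℂ) : (linearForm a).IsHomogeneous 1 :=
  IsHomogeneous.sum _ _ _ fun j _ => isHomogeneous_C_mul_X (a j) j

theorem eval_linearForm (a p : Fin 3 → ℂ) : eval p (linearForm a) = a ⬝ᵥ p := by
  simp [linearForm, dotProduct]

theorem linearForm_ne_zero {a : Fin 3 → ℂ} (ha : a ≠ 0) : linearForm a ≠ 0 := by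
  contrapose! ha
  ext j
  have h := congrArg (eval (Pi.single j 1)) ha
  simpa [eval_linearForm] using h

/-- Multiplication by the cubes of the lines joining `p 0` to the other points. -/
theorem finrank_linSys_three_le {n : ℕ} (p : Fin (n + 1) → Fin 3 → ℂ)
    (hp : ∀ i : Fin n, crossProduct (p 0) (p i.succ) ≠ 0) {e f : ℕ} {m : Fin (n + 1) → ℕ}
    (hm0 : m 0 = f) (hm : ∀ i : Fin n, m i.succ = 3) :
    Module.finrank ℂ (linSys p e m) ≤
      Module.finrank ℂ (linSys p (e + 3 * n) (qh n (f + 3 * n))) := by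
  classical
  let ℓ : Fin n → MvPolynomial (Fin 3) ℂ :=
    fun i => linearForm (crossProduct (p 0) (p i.succ))
  let G : MvPolynomial (Fin 3) ℂ := ∏ i, ℓ i ^ 3
  have hG : G ≠ 0 := Finset.prod_ne_zero_iff.2 fun i _ => pow_ne_zero _ (linearForm_ne_zero (hp i))
  have hinj : Function.Injective (LinearMap.mulLeft ℂ G) := mul_right_injective₀ hG
  have h0 : ∀ i, eval (p 0) (ℓ i) = 0 := fun i => by
    rw [eval_linearForm, dotProduct_comm, dot_self_cross]
  have h1 : ∀ i, eval (p i.succ) (ℓ i) = 0 := fun i => by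
    rw [eval_linearForm, dotProduct_comm, dot_cross_self]
  have hle : (linSys p e m).map (LinearMap.mulLeft ℂ G) ≤
      linSys p (e + 3 * n) (qh n (f + 3 * n)) := by
    rintro _ ⟨F, hF, rfl⟩
    obtain ⟨hd, hF⟩ := mem_linSys.1 hF
    rw [mem_linSys, LinearMap.mulLeft_apply]
    refine ⟨?_, Fin.cases ?_ fun i => ?_⟩
    · have hGd : G.IsHomogeneous (3 * n) := by
        have := IsHomogeneous.prod Finset.univ (fun i => ℓ i ^ 3) (fun _ => 1 * 3)
          fun i _ => (isHomogeneous_linearForm _).pow 3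
        simpa [mul_comm] using this
      rw [add_comm]
      exact hGd.mul hd
    · have := (hF 0).prod_pow_mul Finset.univ (fun i _ => h0 i) 3
      rw [hm0] at this
      simpa [qh] using this
    · have h3 : VanishesToOrder (p i.succ) (3 + 3) (G * F) := by
        rw [show G = ℓ i ^ 3 * ∏ j ∈ Finset.univ.erase i, ℓ j ^ 3 from
          (Finset.mul_prod_erase Finset.univ _ (Finset.mem_univ i)).symm, mul_assoc]
        have := hF i.succ
        rw [hm] at this
        exact (this.mul_left _).pow_mul (h1 i) 3
      simpa [qh, Fin.succ_ne_zero] using h3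
  have h2 := Submodule.finrank_mono hle
  rwa [← (Submodule.equivMapOfInjective _ hinj (linSys p e m)).finrank_eq] at h2

theorem four_mul_le_finrank_linSys_add {n d : ℕ} (hd : 18 * n + 3 ≤ 4 * d) (hn : 1 ≤ n)
    (p : Fin (n + 1) → Fin 3 → ℂ) (hp : ∀ i : Fin n, crossProduct (p 0) (p i.succ) ≠ 0) :
    4 * d ≤ Module.finrank ℂ (linSys p d (qh n (d - 3))) + 18 * n + 2 := by
  obtain ⟨f, rfl⟩ : ∃ f, d = f + 3 + 3 * n := ⟨d - 3 - 3 * n, by omega⟩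
  obtain ⟨m, hm0, hm⟩ : ∃ m : Fin (n + 1) → ℕ, m 0 = f ∧ ∀ i : Fin n, m i.succ = 3 :=
    ⟨Fin.cons f fun _ => 3, rfl, fun _ => rfl⟩
  have h1 := finrank_linSys_three_le p hp (e := f + 3) hm0 hm
  have h2 := choose_two_le_finrank_linSys_add p (e := f + 3) (m := m)
    (Fin.cases (by omega) fun i => by rw [hm]; omega)
  rw [Fin.sum_univ_succ] at h2
  simp only [hm0, hm, Finset.sum_const, Finset.card_univ,
    Fintype.card_fin, smul_eq_mul] at h2
  have h3 : (f + 3 + 2).choose 2 = (f + 1).choose 2 + (4 * f + 10) := by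
    simp only [Nat.choose_succ_succ' _ 1, Nat.choose_one_right]
    omega
  have h4 : (3 + 1).choose 2 = 6 := rfl
  rw [h3, h4] at h2
  rw [show f + 3 + 3 * n - 3 = f + 3 * n by omega]
  omega

theorem natDegree_aeval_le {R : Type*} [CommRing R] [Algebra ℂ R] {d N : ℕ}
    {F : MvPolynomial (Fin 3) ℂ} (hF : F.IsHomogeneous d) {g : Fin 3 → Polynomial R}
    (hg : ∀ i, (g i).natDegree ≤ N) : (aeval g F).natDegree ≤ N * d := by
  rw [aeval_def, eval₂_eq]
  refine Polynomial.natDegree_sum_le_of_forall_le _ _ fun s hs => ?_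
  have hd : ∑ i ∈ s.support, s i = d := (hF.degree_eq_sum_deg_support hs).symm
  refine Polynomial.natDegree_mul_le.trans ?_
  rw [IsScalarTower.algebraMap_apply ℂ R (Polynomial R), Polynomial.algebraMap_eq,
    Polynomial.natDegree_C, zero_add, ← hd, Finset.mul_sum]
  refine (Polynomial.natDegree_prod_le _ _).trans (Finset.sum_le_sum fun i _ => ?_)
  rw [mul_comm]
  exact Polynomial.natDegree_pow_le_of_le _ (hg i)

/-- The second coordinate `s + t ^ r` of `ruling`. -/
noncomputable def rulingDenom (r : ℕ) : Polynomial (Polynomial ℂ) :=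
  Polynomial.X + Polynomial.C (Polynomial.X ^ r)

/-- The parametrization `(t, s) ↦ (t (s + t ^ r) : s + t ^ r : 1 + t ^ m s)` of the plane, with
`s` the outer variable. -/
noncomputable def ruling (m r : ℕ) : Fin 3 → Polynomial (Polynomial ℂ) :=
  ![Polynomial.C Polynomial.X * rulingDenom r, rulingDenom r,
    1 + Polynomial.C (Polynomial.X ^ m) * Polynomial.X]

theorem dvd_aeval_ruling {m r n d k l : ℕ} {a : Fin n → ℂ} (ha : Function.Injective a)
    (har : ∀ i, a i ^ (m + r) = 1) {F : MvPolynomial (Fin 3) ℂ} (hd : F.IsHomogeneous d)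
    (h0 : VanishesToOrder ![0, 0, 1] k F)
    (h : ∀ i, VanishesToOrder ![a i, 1, a i ^ m] l F) :
    rulingDenom r ^ k * Polynomial.C (∏ i, (Polynomial.X - Polynomial.C (a i)) ^ l) ∣
      aeval (ruling m r) F := by
  have hy : rulingDenom r ^ k ∣ aeval (ruling m r) F := by
    refine h0.pow_dvd_aeval hd (ruling m r 2) _ _ fun i => ?_
    fin_cases i <;> simp [ruling]
  obtain ⟨q, hq⟩ := hy
  rw [hq]
  refine mul_dvd_mul_left _ ?_
  have hT : ∀ i, Polynomial.C ((Polynomial.X - Polynomial.C (a i)) ^ l) ∣ q := by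
    intro i
    have h1 : (Polynomial.C (Polynomial.X - Polynomial.C (a i))) ^ l ∣ aeval (ruling m r) F := by
      refine (h i).pow_dvd_aeval hd
        (Polynomial.X + Polynomial.C (Polynomial.C (a i) ^ r)) _ _ fun j => ?_
      have hpow : ∀ e : ℕ, Polynomial.C (Polynomial.X - Polynomial.C (a i)) ∣
          Polynomial.C (Polynomial.X ^ e - Polynomial.C (a i) ^ e) :=
        fun e => map_dvd Polynomial.C (sub_dvd_pow_sub_pow _ _ e)
      have hone : (Polynomial.C (Polynomial.C (a i)) : Polynomial (Polynomial ℂ)) ^ (m + r) = 1 := by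
        rw [← map_pow, ← map_pow, har, map_one, map_one]
      fin_cases j
      · convert (dvd_add ((hpow 1).mul_right Polynomial.X) (hpow (r + 1))) using 1
        simp [ruling, rulingDenom, IsScalarTower.algebraMap_apply ℂ (Polynomial ℂ)]
        ring
      · convert hpow r using 1
        simp [ruling, rulingDenom]
      · convert (hpow m).mul_right Polynomial.X using 1
        simp [ruling, IsScalarTower.algebraMap_apply ℂ (Polynomial ℂ)]
        rw [pow_add] at hone
        linear_combination -hone
    rw [hq] at h1
    rw [map_pow]
    have hp : Prime (Polynomial.C (Polynomial.X - Polynomial.C (a i)) :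
        Polynomial (Polynomial ℂ)) := Polynomial.prime_C_iff.2 (Polynomial.prime_X_sub_C _)
    refine hp.pow_dvd_of_dvd_mul_left _ (fun hdvd => ?_) h1
    have h2 := (Polynomial.C_dvd_iff_dvd_coeff _ _).1 (hp.dvd_of_dvd_pow hdvd) 1
    rw [rulingDenom, Polynomial.coeff_add, Polynomial.coeff_X_one,
      Polynomial.coeff_C_of_ne_zero one_ne_zero, add_zero] at h2
    exact (Polynomial.prime_X_sub_C (a i)).not_dvd_one h2
  rw [Polynomial.C_dvd_iff_dvd_coeff]
  intro j
  refine Finset.prod_dvd_of_coprime (fun i _ i' _ hii' => ?_) fun i _ =>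
    (Polynomial.C_dvd_iff_dvd_coeff _ _).1 (hT i) j
  exact (Polynomial.pairwise_coprime_X_sub_C ha hii').pow

theorem eq_zero_of_aeval_ruling_eq_zero {m r d : ℕ} (hmr : m + r ≠ 0)
    {F : MvPolynomial (Fin 3) ℂ} (hd : F.IsHomogeneous d) (h : aeval (ruling m r) F = 0) :
    F = 0 := by
  let B : MvPolynomial (Fin 3) ℂ :=
    X 1 * (X 0 ^ (m + r) - X 1 ^ (m + r)) * (X 0 ^ m * X 1 - X 2 * X 1 ^ m)
  have hB : B ≠ 0 := by
    intro hB
    have h2 := congrArg (eval ![2, 1, 0]) hB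
    have h3 : (2 : ℂ) ^ (m + r) ≠ 1 := by
      exact_mod_cast (Nat.one_lt_two_pow hmr).ne'
    simp [B, sub_eq_zero, h3] at h2
  refine (mul_eq_zero.1 (?_ : F * B = 0)).resolve_right hB
  refine MvPolynomial.funext fun v => ?_
  rw [map_mul, map_zero, mul_eq_zero, or_iff_not_imp_right]
  intro hv
  simp only [B, map_mul, map_sub, map_pow, eval_X, mul_eq_zero, not_or, sub_eq_zero] at hv
  obtain ⟨⟨hy, ht⟩, hz⟩ := hv
  set t := v 0 / v 1 with ht_def
  set ζ := v 2 / v 1 with hζ_def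
  have h0 : v 0 = t * v 1 := by rw [ht_def]; field_simp
  have h2 : v 2 = ζ * v 1 := by rw [hζ_def]; field_simp
  have ht' : t ^ (m + r) - 1 ≠ 0 := by
    contrapose! ht
    rw [h0, mul_pow, sub_eq_zero.1 ht, one_mul]
  have hz' : t ^ m - ζ ≠ 0 := by
    contrapose! hz
    rw [h0, h2, ← sub_eq_zero.1 hz]
    ring
  let s := (ζ * t ^ r - 1) / (t ^ m - ζ)
  have hy' : s + t ^ r = (t ^ (m + r) - 1) / (t ^ m - ζ) := by
    simp only [s]
    field_simp
    ring
  have hz2 : 1 + t ^ m * s = ζ * (s + t ^ r) := by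
    simp only [s]
    field_simp
    ring
  have hne : s + t ^ r ≠ 0 := by
    rw [hy']
    exact div_ne_zero ht' hz'
  have hev : eval ![t * (s + t ^ r), s + t ^ r, 1 + t ^ m * s] F = 0 := by
    have h1 := congrArg (Polynomial.evalEvalRingHom t s) h
    have hid : (Polynomial.evalEvalRingHom t s).comp (algebraMap ℂ _) = RingHom.id ℂ :=
      RingHom.ext fun z => by
        simp [IsScalarTower.algebraMap_apply ℂ (Polynomial ℂ) (Polynomial (Polynomial ℂ))]
    have hg : Polynomial.evalEvalRingHom t s ∘ ruling m r =
        ![t * (s + t ^ r), s + t ^ r, 1 + t ^ m * s] := by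
      ext i
      fin_cases i <;> simp [ruling, rulingDenom]
      ring
    rwa [map_zero, aeval_def, eval₂_comp_left, hid, hg] at h1
  have hv : v = fun i => v 1 / (s + t ^ r) * ![t * (s + t ^ r), s + t ^ r, 1 + t ^ m * s] i := by
    ext i
    fin_cases i
    · simp [h0]; field_simp
    · simp; field_simp
    · simp [hz2, h2]; field_simp
  have h3 := aeval_mul_left_of_isHomogeneous hd (v 1 / (s + t ^ r))
    ![t * (s + t ^ r), s + t ^ r, 1 + t ^ m * s]
  rw [← hv, MvPolynomial.aeval_eq_eval, MvPolynomial.aeval_eq_eval] at h3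
  simpa [hev] using h3

/-- The substitution `t ↦ X`, `s ↦ X ^ ε * s`, which exchanges the inner and outer variables. -/
noncomputable def swapTwist (ε : ℕ) : Polynomial (Polynomial ℂ) →+* Polynomial (Polynomial ℂ) :=
  Polynomial.eval₂RingHom (Polynomial.mapRingHom Polynomial.C)
    (Polynomial.X ^ ε * Polynomial.C Polynomial.X)

@[simp]
theorem swapTwist_C (ε : ℕ) (δ : Polynomial ℂ) :
    swapTwist ε (Polynomial.C δ) = δ.map Polynomial.C :=
  Polynomial.eval₂_C _ _

@[simp]
theorem swapTwist_X (ε : ℕ) :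
    swapTwist ε Polynomial.X = Polynomial.X ^ ε * Polynomial.C Polynomial.X :=
  Polynomial.eval₂_X _ _

theorem coeff_swapTwist (ε i k : ℕ) (c : Polynomial (Polynomial ℂ)) :
    ((swapTwist ε c).coeff (i + ε * k)).coeff k = (c.coeff k).coeff i := by
  induction c using Polynomial.induction_on' with
  | add p q hp hq => simp [hp, hq]
  | monomial n a =>
    have h : swapTwist ε (Polynomial.monomial n a) =
        a.map Polynomial.C * Polynomial.X ^ (ε * n) * Polynomial.C (Polynomial.X ^ n) := by
      rw [← Polynomial.C_mul_X_pow_eq_monomial, map_mul, map_pow, swapTwist_C, swapTwist_X, mul_pow,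
        ← pow_mul, ← Polynomial.C_pow, mul_assoc]
    rw [h, Polynomial.coeff_mul_C, Polynomial.coeff_mul_X_pow', Polynomial.coeff_mul_X_pow',
      Polynomial.coeff_monomial]
    by_cases hnk : n = k
    · subst hnk
      simp
    · rw [if_neg hnk, Polynomial.coeff_zero]
      split_ifs
      · rw [Polynomial.coeff_map, Polynomial.coeff_C_of_ne_zero (by lia)]
      · simp
      · rfl

theorem natDegree_swapTwist_rulingDenom (ε r : ℕ) :
    r ≤ (swapTwist ε (rulingDenom r)).natDegree := by
  refine Polynomial.le_natDegree_of_ne_zero fun h0 => ?_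
  have h1 := congrArg (Polynomial.coeff · 0) h0
  simp [rulingDenom, Polynomial.coeff_X_pow] at h1
  split_ifs at h1 <;> simp at h1

theorem natDegree_swapTwist_C (ε : ℕ) (δ : Polynomial ℂ) :
    (swapTwist ε (Polynomial.C δ)).natDegree = δ.natDegree := by
  simp [Polynomial.natDegree_map_eq_of_injective Polynomial.C_injective]

theorem natDegree_swapTwist_aeval_ruling_le {m r d ε : ℕ} (hmr : m + ε = r + 1) (hε : ε ≤ r)
    {F : MvPolynomial (Fin 3) ℂ} (hd : F.IsHomogeneous d) :
    (swapTwist ε (aeval (ruling m r) F)).natDegree ≤ (r + 1) * d := by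
  have hcomp : (swapTwist ε).comp (algebraMap ℂ _) = algebraMap ℂ _ := by
    refine RingHom.ext fun z => ?_
    simp [IsScalarTower.algebraMap_apply ℂ (Polynomial ℂ) (Polynomial (Polynomial ℂ))]
  have hC : ∀ e : ℕ, swapTwist ε (Polynomial.C (Polynomial.X ^ e)) = Polynomial.X ^ e := by
    intro e
    simp [-map_pow]
  have hD : (swapTwist ε (rulingDenom r)).natDegree ≤ r := by
    rw [rulingDenom, map_add, hC, swapTwist_X]
    compute_degree
    simpa using hε
  rw [aeval_def, eval₂_comp_left, hcomp, ← aeval_def]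
  refine natDegree_aeval_le hd fun i => ?_
  fin_cases i
  · have h1 := hC 1
    rw [pow_one, pow_one] at h1
    simp only [ruling, Function.comp, Fin.zero_eta, Matrix.cons_val_zero, map_mul, h1]
    refine Polynomial.natDegree_mul_le.trans ?_
    rw [Polynomial.natDegree_X]
    lia
  · simpa [ruling] using hD.trans r.le_succ
  · simp only [ruling, Function.comp, Fin.reduceFinMk, Matrix.cons_val, map_add, map_mul, map_one,
      hC, swapTwist_X, ← mul_assoc, ← pow_add, hmr]
    compute_degree

theorem exponent_le_of_aeval_ruling_eq {m r d e ε k i : ℕ} (hmr : m + ε = r + 1) (hε : ε ≤ r)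
    {F : MvPolynomial (Fin 3) ℂ} (hd : F.IsHomogeneous d) {δ : Polynomial ℂ} (hδ : δ ≠ 0)
    {c : Polynomial (Polynomial ℂ)}
    (h : aeval (ruling m r) F = rulingDenom r ^ e * Polynomial.C δ * c)
    (hc : (c.coeff k).coeff i ≠ 0) :
    e + k ≤ d ∧ i + ε * k + e * r + δ.natDegree ≤ (r + 1) * d := by
  have hc0 : c.coeff k ≠ 0 := fun h0 => hc (by simp [h0])
  have hmonic : (rulingDenom r).Monic := Polynomial.monic_X_add_C _
  constructor
  · have h1 : (aeval (ruling m r) F).natDegree ≤ 1 * d := by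
      refine natDegree_aeval_le hd fun i => ?_
      fin_cases i <;> simp [ruling, rulingDenom] <;> compute_degree
    have hcδ : (Polynomial.C δ * c).natDegree = c.natDegree :=
      Polynomial.natDegree_C_mul hδ
    rw [h, mul_assoc, Polynomial.Monic.natDegree_mul' (hmonic.pow e), hcδ,
      hmonic.natDegree_pow, rulingDenom, Polynomial.natDegree_X_add_C] at h1
    · have := Polynomial.le_natDegree_of_ne_zero hc0
      lia
    · refine mul_ne_zero (Polynomial.C_ne_zero.2 hδ) fun h0 => ?_
      simp [h0] at hc0
  · have h1 := natDegree_swapTwist_aeval_ruling_le hmr hε hd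
    have hi : i + ε * k ≤ (swapTwist ε c).natDegree :=
      Polynomial.le_natDegree_of_ne_zero fun h0 => hc (by rw [← coeff_swapTwist ε, h0]; simp)
    have hθc : swapTwist ε c ≠ 0 := fun h0 => hc (by rw [← coeff_swapTwist ε, h0]; simp)
    have hθδ : swapTwist ε (Polynomial.C δ) ≠ 0 := by
      simpa [Polynomial.map_eq_zero_iff Polynomial.C_injective] using hδ
    have hθD : swapTwist ε (rulingDenom r) ≠ 0 := by
      intro h0
      have h2 := congrArg (Polynomial.evalEvalRingHom 1 1) h0
      norm_num [rulingDenom] at h2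
    rw [h, map_mul, map_mul, map_pow, Polynomial.natDegree_mul (mul_ne_zero (pow_ne_zero _ hθD) hθδ)
      hθc, Polynomial.natDegree_mul (pow_ne_zero _ hθD) hθδ, Polynomial.natDegree_pow,
      natDegree_swapTwist_C] at h1
    have := Nat.mul_le_mul_left e (natDegree_swapTwist_rulingDenom ε r)
    lia

theorem mem_of_forall_coeff_ne_zero {S : Submodule ℂ (Polynomial (Polynomial ℂ))}
    {c : Polynomial (Polynomial ℂ)}
    (h : ∀ k i, (c.coeff k).coeff i ≠ 0 →
      Polynomial.C (Polynomial.X ^ i) * Polynomial.X ^ k ∈ S) : c ∈ S := by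
  rw [c.as_sum_support_C_mul_X_pow]
  refine Submodule.sum_mem _ fun k _ => ?_
  rw [(c.coeff k).as_sum_support_C_mul_X_pow, map_sum, Finset.sum_mul]
  refine Submodule.sum_mem _ fun i hi => ?_
  have := S.smul_mem ((c.coeff k).coeff i) (h k i (Polynomial.mem_support_iff.1 hi))
  rwa [← smul_mul_assoc, Polynomial.smul_C, Polynomial.smul_eq_C_mul] at this

theorem finrank_linSys_le_sum {m r n d ε : ℕ} (hmr : m + ε = r + 1) (hε : ε ≤ r)
    {a : Fin n → ℂ} (ha : Function.Injective a) (har : ∀ i, a i ^ (m + r) = 1) :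
    Module.finrank ℂ (linSys (Fin.cons ![0, 0, 1] fun i => ![a i, 1, a i ^ m]) d (qh n (d - 3))) ≤
      ∑ k : Fin 4, ((r + 1) * d + 1 - (d - 3) * r - 6 * n - ε * k) := by
  set V := linSys (Fin.cons ![0, 0, 1] fun i => ![a i, 1, a i ^ m]) d (qh n (d - 3))
  set δ : Polynomial ℂ := ∏ i, (Polynomial.X - Polynomial.C (a i)) ^ 6 with hδ_def
  have hδ : δ.Monic := Polynomial.monic_prod_of_monic _ _ fun i _ =>
    (Polynomial.monic_X_sub_C _).pow 6
  have hδdeg : δ.natDegree = 6 * n := by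
    rw [hδ_def, Polynomial.natDegree_prod_of_monic _ _ fun i _ =>
      (Polynomial.monic_X_sub_C _).pow 6]
    simp [mul_comm]
  let b : (Σ k : Fin 4, Fin ((r + 1) * d + 1 - (d - 3) * r - 6 * n - ε * k)) →
      Polynomial (Polynomial ℂ) := fun x => rulingDenom r ^ (d - 3) * Polynomial.C δ *
        (Polynomial.C (Polynomial.X ^ (x.2 : ℕ)) * Polynomial.X ^ (x.1 : ℕ))
  let f := (aeval (R := ℂ) (ruling m r)).toLinearMap.domRestrict V
  have hf : Function.Injective f := by
    rw [← LinearMap.ker_eq_bot, LinearMap.ker_eq_bot']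
    rintro ⟨F, hF⟩ h
    exact Subtype.ext (eq_zero_of_aeval_ruling_eq_zero (by lia) (mem_linSys.1 hF).1 h)
  have hle : LinearMap.range f ≤ Submodule.span ℂ (Set.range b) := by
    rintro _ ⟨⟨F, hF⟩, rfl⟩
    obtain ⟨hFd, hFv⟩ := mem_linSys.1 hF
    obtain ⟨h0, h⟩ := Fin.forall_fin_succ.1 hFv
    obtain ⟨c, hc⟩ := dvd_aeval_ruling (m := m) (r := r) (k := d - 3) (l := 6) ha har hFd
      (by simpa [qh] using h0) (by simpa [qh] using h)
    change aeval (ruling m r) F ∈ _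
    rw [hc]
    refine mem_of_forall_coeff_ne_zero (S := (Submodule.span ℂ (Set.range b)).comap
      (LinearMap.mulLeft ℂ (rulingDenom r ^ (d - 3) * Polynomial.C δ))) fun k i hki => ?_
    obtain ⟨h1, h2⟩ := exponent_le_of_aeval_ruling_eq hmr hε hFd hδ.ne_zero hc hki
    rw [hδdeg] at h2
    have hk : k < 4 := by lia
    have hi : i < (r + 1) * d + 1 - (d - 3) * r - 6 * n - ε * (⟨k, hk⟩ : Fin 4) := by
      dsimp only
      lia
    rw [Submodule.mem_comap, LinearMap.mulLeft_apply]
    exact Submodule.subset_span (Set.mem_range_self (f := b) ⟨⟨k, hk⟩, ⟨i, hi⟩⟩)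
  calc Module.finrank ℂ V = Module.finrank ℂ (LinearMap.range f) :=
        (LinearMap.finrank_range_of_inj hf).symm
    _ ≤ Module.finrank ℂ (Submodule.span ℂ (Set.range b)) := by
        have := FiniteDimensional.span_of_finite ℂ (Set.finite_range b)
        exact Submodule.finrank_mono hle
    _ ≤ _ := (finrank_range_le_card b).trans_eq (by simp)

theorem exists_finrank_linSys_le {n d : ℕ} (hn : 1 ≤ n) (hd : 18 * n + 3 ≤ 4 * d)
    (h : Odd n ∨ 2 * d ≠ 9 * n + 2) :
    ∃ p : Fin (n + 1) → Fin 3 → ℂ,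
      Module.finrank ℂ (linSys p d (qh n (d - 3))) + 18 * n + 2 ≤ 4 * d := by
  have hζ := Complex.isPrimitiveRoot_exp n (by lia)
  set ζ := Complex.exp (2 * Real.pi * Complex.I / n)
  have ha : Function.Injective fun i : Fin n => ζ ^ (i : ℕ) := fun i j hij =>
    Fin.ext (hζ.pow_inj i.2 j.2 hij)
  have har : ∀ q, q = n → ∀ i : Fin n, (ζ ^ (i : ℕ)) ^ q = 1 := by
    rintro q rfl i
    rw [← pow_mul, mul_comm, pow_mul, hζ.pow_eq_one, one_pow]
  refine ⟨Fin.cons ![0, 0, 1] fun i => ![ζ ^ (i : ℕ), 1, (ζ ^ (i : ℕ)) ^ (n - n / 2)], ?_⟩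
  obtain ⟨e, rfl⟩ : ∃ e, d = e + 3 := ⟨d - 3, by lia⟩
  rcases Nat.even_or_odd' n with ⟨r, rfl | rfl⟩
  · have h1 := finrank_linSys_le_sum (m := 2 * r - 2 * r / 2) (r := r) (d := e + 3) (ε := 1)
      (by lia) (by lia) ha (har _ (by lia))
    have h2 : ¬Odd (2 * r) := by simp
    have h3 : 2 * (e + 3) ≠ 9 * (2 * r) + 2 := h.resolve_left h2
    have h4 : (r + 1) * (e + 3) + 1 - (e + 3 - 3) * r - 6 * (2 * r) = e + 4 + 3 * r - 12 * r := by
      rw [Nat.add_sub_cancel]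
      have : (r + 1) * (e + 3) = e * r + e + 3 * r + 3 := by ring
      lia
    simp only [Fin.sum_univ_four, h4] at h1
    norm_num at h1
    lia
  · have h1 := finrank_linSys_le_sum (m := 2 * r + 1 - (2 * r + 1) / 2) (r := r) (d := e + 3)
      (ε := 0) (by lia) (by lia) ha (har _ (by lia))
    have h4 : (r + 1) * (e + 3) + 1 - (e + 3 - 3) * r - 6 * (2 * r + 1) =
        e + 4 + 3 * r - (12 * r + 6) := by
      rw [Nat.add_sub_cancel]
      have : (r + 1) * (e + 3) = e * r + e + 3 * r + 3 := by ring
      lia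
    simp only [Fin.sum_univ_four, h4] at h1
    norm_num at h1
    lia

theorem virtDim_qh_sub_three {d n : ℕ} (hd : 3 ≤ d) :
    virtDim d (qh n (d - 3)) = 4 * (d : ℤ) - 21 * n - 3 := by
  obtain ⟨e, rfl⟩ : ∃ e, d = e + 3 := ⟨d - 3, by lia⟩
  have h1 : ((e + 3 : ℕ) : ℤ) * ((e + 3 : ℕ) + 3) = e * (e + 1) + 2 * (4 * e + 9) := by
    push_cast
    ring
  simp only [virtDim, qh, Fin.sum_univ_succ, Fin.succ_ne_zero, if_true, if_false, h1,
    Nat.add_sub_cancel]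
  rw [Int.add_mul_ediv_left _ _ two_ne_zero]
  simp
  ring

theorem special_L_d_dsub3_sixn (d n : ℕ) (hn : 1 ≤ n) (hd : 18 * n + 3 ≤ 4 * d) :
    virtDim d (qh n (d - 3)) = 4 * (d : ℤ) - 21 * n - 3 ∧
    Generically (n + 1) (fun p =>
      projDim p d (qh n (d - 3)) ≥ 4 * (d : ℤ) - 18 * n - 3 ∧
      ((Odd n ∨ 2 * d ≠ 9 * n + 2) →
        projDim p d (qh n (d - 3)) = 4 * (d : ℤ) - 18 * n - 3) ∧
      projDim p d (qh n (d - 3)) > max (-1) (virtDim d (qh n (d - 3)))) := by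
  refine ⟨virtDim_qh_sub_three (by lia), ?_⟩
  rw [virtDim_qh_sub_three (by lia)]
  obtain ⟨P, hP, hP'⟩ : ∃ P : MvPolynomial (Fin (n + 1) × Fin 3) ℂ, P ≠ 0 ∧
      ∀ p : Fin (n + 1) → Fin 3 → ℂ, eval (fun x => p x.1 x.2) P ≠ 0 →
        (Odd n ∨ 2 * d ≠ 9 * n + 2) →
          Module.finrank ℂ (linSys p d (qh n (d - 3))) + 18 * n + 2 ≤ 4 * d := by
    by_cases h : Odd n ∨ 2 * d ≠ 9 * n + 2
    · obtain ⟨p₀, hp₀⟩ := exists_finrank_linSys_le hn hd h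
      obtain ⟨P, hP, hP'⟩ := exists_forall_finrank_linSys_le (e := d) (m := qh n (d - 3)) p₀
        fun i => by unfold qh; split_ifs <;> lia
      exact ⟨P, hP, fun p hp _ => by have := hP' p hp; lia⟩
    · exact ⟨1, one_ne_zero, fun _ _ h' => absurd h' h⟩
  let R : MvPolynomial (Fin (n + 1) × Fin 3) ℂ :=
    ∏ i : Fin n, (X (0, 1) * X (i.succ, 2) - X (0, 2) * X (i.succ, 1))
  have hR : R ≠ 0 := by
    refine Finset.prod_ne_zero_iff.2 fun i _ h => ?_
    have h1 := congrArg (eval fun x : Fin (n + 1) × Fin 3 =>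
      if x = (0, 1) ∨ x = (i.succ, 2) then (1 : ℂ) else 0) h
    simp at h1
  refine ⟨P * R, mul_ne_zero hP hR, fun p _ hp => ?_⟩
  rw [map_mul] at hp
  have hupper := hP' p (left_ne_zero_of_mul hp)
  have hlower := four_mul_le_finrank_linSys_add hd hn p fun i h => by
    refine Finset.prod_ne_zero_iff.1 ((map_prod _ _ _).symm.trans_ne (right_ne_zero_of_mul hp)) i
      (Finset.mem_univ i) ?_
    simpa [cross_apply] using congrFun h 0
  unfold projDim
  refine ⟨?_, fun h => ?_, ?_⟩
  · lia
  · have := hupper h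
    lia
  · rw [gt_iff_lt, max_lt_iff]
    constructor <;> lia
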